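/- Let N ≥ 2 and let p, q be positive integers with p + q ≤ N. The number of functions f ∈ F_N whose global orbit pattern is [p, q] equals (N−1)! · N^{N−(p+q)} / ((N−(p+q))! · q). -/

import Mathlib

/-!
A function `f` has pattern `[p, q]` iff it has exactly two cycles, of lengths `p` and `q`, and `0`
lies in the component of the first (`gop_eq_pair_iff`). Write `V = Fin N` and count triples
`(f, x, e)` where `e : ZMod p ⊕ ZMod q ↪ V` parametrises the two cycles of `f` and the point `x`
lies in the component of the `p`-cycle (`Marked f x e`).

* For each `f` and `x` there are `p * q` or no embeddings `e`, since `e` is unique up to rotating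
  the two cycles (`card_marked`). By conjugation the number of pairs `(f, e)` does not depend on
  `x`, so there are `N * p * q * #{f | gop f = [p, q]}` triples.
* For each of the `N! / (N - (p + q))!` embeddings `e`, the number of pairs `(f, x)` is
  `p * N ^ (N - (p + q))` (`sum_card_marked`).

The second count is a case of `sum_completions`: the undefined values of `f` are chosen one at a
time, and the number of points known to flow into the `p`-cycle, summed over all choices that do
not create a new cycle, is multiplied by exactly `N` at every step. Initially it is `p`.
-/

open scoped Classical

/-- Two points are in the same component of `X_N` under `f`:
`x ~ y` iff some forward iterate of `x` equals some forward iterate of `y`. -/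
def sameComp {N : ℕ} (f : Fin N → Fin N) (x y : Fin N) : Prop :=
  ∃ k l : ℕ, f^[k] x = f^[l] y

/-- The order `ω(x, f)` of a point `x`: the length of the periodic cycle contained in
the component of `x`, i.e. the least `p > 0` such that the orbit of `x` is eventually
`p`-periodic. -/
noncomputable def gopOrd {N : ℕ} (f : Fin N → Fin N) (x : Fin N) : ℕ :=
  sInf {p : ℕ | 0 < p ∧ ∃ K : ℕ, f^[K + p] x = f^[K] x}

/-- The global orbit pattern of `f`: the list of orders of the least elements of the
components of `X_N` under `f`, listed in increasing order of those least elements. -/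
noncomputable def gop {N : ℕ} (f : Fin N → Fin N) : List ℕ :=
  ((Finset.univ.filter (fun x : Fin N => ∀ y : Fin N, sameComp f x y → x ≤ y)).sort (· ≤ ·)).map
    (gopOrd f)

open Finset

/-! ### Reaching a set and completing partial functions -/

/-- Some forward iterate of `y` under `f` lies in `S`. -/
def Reach {V : Type*} (f : V → V) (S : Set V) (y : V) : Prop := ∃ k : ℕ, f^[k] y ∈ S

section Reach

variable {V : Type*} {f : V → V} {S : Set V}

lemma iterate_mem_of_closed (hS : ∀ y ∈ S, f y ∈ S) {y : V} (hy : y ∈ S) (k : ℕ) :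
    f^[k] y ∈ S := by
  induction k with
  | zero => exact hy
  | succ k ih => rw [Function.iterate_succ_apply']; exact hS _ ih

lemma reach_iterate (hS : ∀ y ∈ S, f y ∈ S) (k : ℕ) (y : V) :
    Reach f S (f^[k] y) ↔ Reach f S y := by
  constructor
  · rintro ⟨m, hm⟩
    exact ⟨m + k, by rwa [Function.iterate_add_apply]⟩
  · rintro ⟨m, hm⟩
    refine ⟨m, ?_⟩
    rw [← Function.iterate_add_apply, Nat.add_comm, Function.iterate_add_apply]
    exact iterate_mem_of_closed hS hm k

lemma reach_fixed {r : V} (hr : f r = r) : Reach f S r ↔ r ∈ S := by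
  constructor
  · rintro ⟨k, hk⟩
    rwa [Function.iterate_fixed hr] at hk
  · intro h
    exact ⟨0, h⟩

/-- Redirecting the fixed point `r` to a point `t` outside its basin: exactly the points of the
basin of `r` change their fate, and they inherit that of `t`. -/
lemma reach_update [DecidableEq V] {r t : V} (hS : ∀ y ∈ S, f y ∈ S) (hrS : r ∉ S)
    (hr : f r = r) (ht : ¬ Reach f {r} t) (x : V) :
    Reach (Function.update f r t) S x ↔ Reach f S x ∨ (Reach f {r} x ∧ Reach f S t) := by
  have hS' : ∀ y ∈ S, Function.update f r t y ∈ S := by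
    intro y hy
    rw [Function.update_of_ne (ne_of_mem_of_not_mem hy hrS)]
    exact hS y hy
  -- Orbits avoiding `r` are unaffected.
  have key : ∀ y, ¬ Reach f {r} y → ∀ k, (Function.update f r t)^[k] y = f^[k] y := by
    intro y hy k
    induction k with
    | zero => rfl
    | succ k ih =>
      rw [Function.iterate_succ_apply', Function.iterate_succ_apply', ih,
        Function.update_of_ne (fun h => hy ⟨k, h⟩)]
  have key2 : ∀ y, ¬ Reach f {r} y → (Reach (Function.update f r t) S y ↔ Reach f S y) := by
    intro y hy
    simp only [Reach, key y hy]
  by_cases hx : Reach f {r} x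
  · have h1 : ∀ k y, f^[k] y = r → ∃ m, (Function.update f r t)^[m] y = r := by
      intro k
      induction k with
      | zero => intro y hy; exact ⟨0, hy⟩
      | succ k ih =>
        intro y hy
        by_cases hyr : y = r
        · exact ⟨0, hyr⟩
        · obtain ⟨m, hm⟩ := ih (f y) hy
          refine ⟨m + 1, ?_⟩
          rw [Function.iterate_succ_apply, Function.update_of_ne hyr, hm]
    have h2 : ¬ Reach f S x := by
      obtain ⟨k, hk⟩ := hx
      rw [← reach_iterate hS k, show f^[k] x = r from hk, reach_fixed hr]
      exact hrS
    obtain ⟨m, hm⟩ := h1 _ x hx.choose_spec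
    have h3 : (Function.update f r t)^[m + 1] x = t := by
      rw [Function.iterate_succ_apply', hm, Function.update_self]
    rw [← reach_iterate hS' (m + 1), h3, key2 t ht]
    tauto
  · rw [key2 x hx]
    tauto

end Reach

/-- Let `U` consist of fixed points of `g` outside the closed set `C`, all points being eventually
mapped into `C ∪ U`. Among the functions `f` obtained from `g` by redefining it on `U` so that all
points reach `C`, the total number of pairs `(f, x)` with `x` reaching the closed set `A ⊆ C` is
`|V| ^ |U|` times the number of points reaching `A` under `g`.

In the induction one point `r` of `U` is sent to `t`. Targets in the basin of `r` create a new cycle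
and contribute nothing; if `a` points reach `A` and `ρ` reach `r`, then `a` targets lead to
`a + ρ` points reaching `A` and the other `|V| - ρ - a` leave the number at `a`, in total
`a * |V|`. -/
lemma sum_completions {V : Type*} [Fintype V] (A C : Set V) (hAC : A ⊆ C)
    (U : Finset V) : ∀ (g : V → V), (∀ y ∈ A, g y ∈ A) → (∀ y ∈ C, g y ∈ C) →
      (∀ u ∈ U, g u = u) → (∀ u ∈ U, u ∉ C) → (∀ y, Reach g (C ∪ U) y) →
      ∑ f : V → V with (∀ y ∉ U, f y = g y) ∧ (∀ y, Reach f C y), #{x | Reach f A x}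
        = #{x | Reach g A x} * Fintype.card V ^ #U := by
  induction U using Finset.induction_on with
  | empty =>
    intro g hA hC _ _ hg
    have : (univ.filter fun f : V → V =>
        (∀ y ∉ (∅ : Finset V), f y = g y) ∧ (∀ y, Reach f C y)) = {g} := by
      ext f
      simp only [mem_filter, mem_univ, true_and, mem_singleton, notMem_empty, not_false_eq_true,
        forall_const]
      constructor
      · rintro ⟨h, -⟩
        exact funext h
      · rintro rfl
        refine ⟨fun _ => rfl, ?_⟩
        simpa using hg
    rw [this]
    simp
  | insert r U hrU ih =>
    intro g hA hC hU hUC hg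
    have hr : g r = r := hU r (mem_insert_self _ _)
    have hrC : r ∉ C := hUC r (mem_insert_self _ _)
    have hrA : r ∉ A := fun h => hrC (hAC h)
    have hCU : ∀ y ∈ C ∪ (U : Set V), g y ∈ C ∪ (U : Set V) := by
      rintro y (hy | hy)
      · exact Or.inl (hC y hy)
      · right
        rw [hU y (mem_insert_of_mem hy)]
        exact hy
    have hAr : ∀ x, Reach g A x → ¬ Reach g {r} x := by
      rintro x hx ⟨k, hk⟩
      rw [← reach_iterate hA k, show g^[k] x = r from hk, reach_fixed hr] at hx
      exact hrA hx
    have step : ∀ t : V,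
        ∑ f : V → V with ((∀ y ∉ insert r U, f y = g y) ∧ (∀ y, Reach f C y)) ∧ f r = t,
            #{x | Reach f A x}
          = (if Reach g {r} t then 0 else
              (#{x | Reach g A x} + if Reach g A t then #{x | Reach g {r} x} else 0))
            * Fintype.card V ^ #U := by
      intro t
      split_ifs with ht htA
      · -- The basin of `r` under `g` is closed under `f` and misses `C`.
        rw [zero_mul]
        apply Finset.sum_eq_zero
        intro f hf
        exfalso
        simp only [mem_filter, mem_univ, true_and] at hf
        obtain ⟨⟨hf1, hf2⟩, hfr⟩ := hf
        have hcl : ∀ y ∈ {y | Reach g {r} y}, f y ∈ {y | Reach g {r} y} := by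
          intro y hy
          by_cases hyr : y = r
          · rw [hyr, hfr]; exact ht
          · have hyU : y ∉ insert r U := by
              intro h
              have := (reach_fixed (hU y h)).1 hy
              exact hyr this
            rw [hf1 y hyU]
            have hc : ∀ z ∈ ({r} : Set V), g z ∈ ({r} : Set V) := by
              rintro z rfl; exact hr
            exact (reach_iterate hc 1 y).2 hy
        obtain ⟨k, hk⟩ := hf2 r
        obtain ⟨m, hm⟩ := iterate_mem_of_closed hcl (y := r) ⟨0, rfl⟩ k
        have := iterate_mem_of_closed hC hk m
        rw [show g^[m] (f^[k] r) = r from hm] at this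
        exact hrC this
      all_goals
        have hne : ∀ {S : Set V}, r ∉ S → ∀ {y}, y ∈ S → Function.update g r t y = g y := by
          intro S hS y hy
          exact Function.update_of_ne (ne_of_mem_of_not_mem hy hS) _ _
        have hrCU : r ∉ C ∪ (U : Set V) := by
          rintro (h | h)
          · exact hrC h
          · exact hrU h
        have hrec := ih (Function.update g r t)
          (fun y hy => by rw [hne hrA hy]; exact hA y hy)
          (fun y hy => by rw [hne hrC hy]; exact hC y hy)
          (fun u hu => by
            rw [hne (S := (U : Set V)) hrU hu]; exact hU u (mem_insert_of_mem hu))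
          (fun u hu => hUC u (mem_insert_of_mem hu))
          (fun y => by
            have hsplit : ∀ z, Reach g {r} z ∨ Reach g (C ∪ (U : Set V)) z := by
              intro z
              obtain ⟨k, hk⟩ := hg z
              simp only [coe_insert, Set.mem_union, Set.mem_insert_iff] at hk
              rcases hk with h | h | h
              · exact Or.inr ⟨k, Or.inl h⟩
              · exact Or.inl ⟨k, h⟩
              · exact Or.inr ⟨k, Or.inr h⟩
            rw [reach_update hCU hrCU hr ht]
            have h1 := hsplit y
            have h2 := hsplit t
            tauto)
        have hfil : (univ.filter fun f : V → V =>
            ((∀ y ∉ insert r U, f y = g y) ∧ (∀ y, Reach f C y)) ∧ f r = t)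
            = univ.filter fun f : V → V =>
              (∀ y ∉ U, f y = Function.update g r t y) ∧ (∀ y, Reach f C y) := by
          ext f
          simp only [mem_filter, mem_univ, true_and]
          constructor
          · rintro ⟨⟨h1, h2⟩, h3⟩
            refine ⟨fun y hy => ?_, h2⟩
            by_cases hyr : y = r
            · rw [hyr, Function.update_self, h3]
            · rw [Function.update_of_ne hyr, h1 y (by simp [hyr, hy])]
          · rintro ⟨h1, h2⟩
            refine ⟨⟨fun y hy => ?_, h2⟩, ?_⟩
            · simp only [mem_insert, not_or] at hy
              rw [h1 y hy.2, Function.update_of_ne hy.1]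
            · rw [h1 r hrU, Function.update_self]
        rw [hfil, hrec]
        congr 1
      · rw [← card_union_of_disjoint]
        · congr 1
          ext x
          simp only [mem_filter, mem_univ, true_and, mem_union]
          rw [reach_update hA hrA hr ht]
          tauto
        · rw [disjoint_filter]
          intro x _ hx
          exact hAr x hx
      · rw [add_zero]
        congr 1
        ext x
        simp only [mem_filter, mem_univ, true_and]
        rw [reach_update hA hrA hr ht]
        tauto
    have hsum : ∀ a ρ : ℕ, ρ = #{x | Reach g {r} x} → a = #{x | Reach g A x} →
        ∑ t : V, (if Reach g {r} t then 0 else (a + if Reach g A t then ρ else 0))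
          = a * Fintype.card V := by
      intro a ρ hρ ha
      have h1 : ∀ t : V, (if Reach g {r} t then 0 else (a + if Reach g A t then ρ else 0))
          = (if ¬ Reach g {r} t then a else 0) + if Reach g A t then ρ else 0 := by
        intro t
        by_cases h : Reach g {r} t
        · have : ¬ Reach g A t := fun h' => hAr t h' h
          simp [h, this]
        · simp [h]
      rw [Finset.sum_congr rfl (fun t _ => h1 t), sum_add_distrib, ← sum_filter, ← sum_filter,
        sum_const, sum_const, smul_eq_mul, smul_eq_mul, ← ha]
      have h2 := card_filter_add_card_filter_not (s := (univ : Finset V)) (fun t => Reach g {r} t)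
      rw [← hρ, card_univ] at h2
      rw [← h2]
      ring
    rw [← Finset.sum_fiberwise _ (fun f : V → V => f r)]
    simp only [filter_filter]
    rw [Finset.sum_congr rfl (fun t _ => step t), ← Finset.sum_mul, hsum _ _ rfl rfl,
      card_insert_of_notMem hrU, pow_succ]
    ring

/-! ### Functions with marked cycles -/

/-- The successor on the disjoint union of a `p`-cycle and a `q`-cycle. -/
def rot (p q : ℕ) : ZMod p ⊕ ZMod q → ZMod p ⊕ ZMod q := Sum.map (· + 1) (· + 1)

/-- The embedding `e` identifies a `p`-cycle and a `q`-cycle of `f`; these are the only cycles of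
`f`, and `x` lies in the component of the `p`-cycle. -/
def Marked {V : Type*} {p q : ℕ} (f : V → V) (x : V) (e : ZMod p ⊕ ZMod q ↪ V) : Prop :=
  (∀ s, f (e s) = e (rot p q s)) ∧ (∀ y, Reach f (Set.range e) y) ∧
    Reach f (Set.range (e ∘ Sum.inl)) x

section Marked

variable {V : Type*} {p q : ℕ} {f : V → V} {e : ZMod p ⊕ ZMod q ↪ V}

lemma iterate_inl (h : ∀ s, f (e s) = e (rot p q s)) (k : ℕ) (i : ZMod p) :
    f^[k] (e (Sum.inl i)) = e (Sum.inl (i + k)) := by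
  induction k with
  | zero => simp
  | succ k ih =>
    rw [Function.iterate_succ_apply', ih, h]
    simp [rot, add_assoc]

lemma iterate_inr (h : ∀ s, f (e s) = e (rot p q s)) (k : ℕ) (i : ZMod q) :
    f^[k] (e (Sum.inr i)) = e (Sum.inr (i + k)) := by
  induction k with
  | zero => simp
  | succ k ih =>
    rw [Function.iterate_succ_apply', ih, h]
    simp [rot, add_assoc]

/-- Rotating both marked cycles. -/
def rotateMarking (e : ZMod p ⊕ ZMod q ↪ V) (c : ZMod p × ZMod q) : ZMod p ⊕ ZMod q ↪ V :=
  (Equiv.sumCongr (Equiv.addRight c.1) (Equiv.addRight c.2)).toEmbedding.trans e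

@[simp] lemma rotateMarking_inl (c : ZMod p × ZMod q) (i : ZMod p) :
    rotateMarking e c (Sum.inl i) = e (Sum.inl (i + c.1)) := rfl

@[simp] lemma rotateMarking_inr (c : ZMod p × ZMod q) (i : ZMod q) :
    rotateMarking e c (Sum.inr i) = e (Sum.inr (i + c.2)) := rfl

lemma Marked.rotate {x : V} (h : Marked f x e) (c : ZMod p × ZMod q) :
    Marked f x (rotateMarking e c) := by
  obtain ⟨h1, h2, h3⟩ := h
  have hr : Set.range (rotateMarking e c) = Set.range e := by
    simp only [rotateMarking, Function.Embedding.trans, Function.Embedding.coeFn_mk]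
    exact (Equiv.sumCongr (Equiv.addRight c.1) (Equiv.addRight c.2)).surjective.range_comp e
  have hl : Set.range (rotateMarking e c ∘ Sum.inl) = Set.range (e ∘ Sum.inl) :=
    (Equiv.addRight c.1).surjective.range_comp (e ∘ Sum.inl)
  refine ⟨?_, ?_, ?_⟩
  · rintro (i | i)
    · simp [rot, h1, add_right_comm]
    · simp [rot, h1, add_right_comm]
  · rw [hr]; exact h2
  · rw [hl]; exact h3

/-- The markings of a given `f` are unique up to rotation. -/
lemma Marked.exists_rotate [NeZero p] [NeZero q] {x : V} {e' : ZMod p ⊕ ZMod q ↪ V}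
    (h : Marked f x e) (h' : Marked f x e') : ∃ c, rotateMarking e c = e' := by
  obtain ⟨h1', h2', k', i', hk'⟩ := h'
  obtain ⟨h1, h2, k, i, hk⟩ := h
  -- The orbit of `x` meets both marked `p`-cycles.
  have hl : e (Sum.inl (i + k')) = e' (Sum.inl (i' + k)) := by
    rw [← iterate_inl h1, ← iterate_inl h1']
    change f^[k'] ((e ∘ Sum.inl) i) = f^[k] ((e' ∘ Sum.inl) i')
    rw [hk, hk', ← Function.iterate_add_apply, ← Function.iterate_add_apply, Nat.add_comm]
  have hl' : ∀ j : ZMod p, e (Sum.inl (j + (i + k' - (i' + k)))) = e' (Sum.inl j) := by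
    intro j
    have := congrArg (f^[(j - (i' + k)).val]) hl
    rw [iterate_inl h1, iterate_inl h1', ZMod.natCast_zmod_val] at this
    convert this using 3 <;> ring
  obtain ⟨m, s, hs⟩ := h2 (e' (Sum.inr 0))
  rw [iterate_inr h1', zero_add] at hs
  rcases s with s | s
  · exfalso
    have := hl' (s - (i + k' - (i' + k)))
    rw [sub_add_cancel, hs] at this
    exact absurd (e'.injective this) (by simp)
  · have hr' : ∀ j : ZMod q, e (Sum.inr (j + (s - m))) = e' (Sum.inr j) := by
      intro j
      have := congrArg (f^[(j - m).val]) hs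
      rw [iterate_inr h1, iterate_inr h1', ZMod.natCast_zmod_val] at this
      convert this using 3 <;> ring
    refine ⟨((i + k' - (i' + k) : ZMod p), (s - m : ZMod q)), ?_⟩
    ext (j | j)
    · exact hl' j
    · exact hr' j

/-- The markings of `f` form a single free orbit under independent rotations of the two cycles. -/
lemma card_marked [NeZero p] [NeZero q] [Fintype V] {x : V} (h : Marked f x e) :
    #{e' : ZMod p ⊕ ZMod q ↪ V | Marked f x e'} = p * q := by
  have : (univ.filter fun e' : ZMod p ⊕ ZMod q ↪ V => Marked f x e')
      = univ.image (rotateMarking e) := by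
    ext e'
    simp only [mem_filter, mem_univ, true_and, mem_image]
    constructor
    · exact fun h' => h.exists_rotate h'
    · rintro ⟨c, rfl⟩
      exact h.rotate c
  rw [this, card_image_of_injective, card_univ, Fintype.card_prod, ZMod.card, ZMod.card]
  intro c d hcd
  have h1 := DFunLike.congr_fun hcd (Sum.inl 0)
  have h2 := DFunLike.congr_fun hcd (Sum.inr 0)
  simp only [rotateMarking_inl, rotateMarking_inr, zero_add,
    EmbeddingLike.apply_eq_iff_eq, Sum.inl.injEq, Sum.inr.injEq] at h1 h2
  exact Prod.ext h1 h2

/-- Being marked is invariant under relabelling by a permutation `σ`. -/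
lemma Marked.conj {x : V} (σ : Equiv.Perm V) (h : Marked f x e) :
    Marked (σ ∘ f ∘ σ.symm) (σ x) (e.trans σ.toEmbedding) := by
  have hit : ∀ k y, (σ ∘ f ∘ σ.symm)^[k] y = σ (f^[k] (σ.symm y)) := by
    intro k y
    induction k with
    | zero => simp
    | succ k ih => rw [Function.iterate_succ_apply', ih, Function.iterate_succ_apply']; simp
  obtain ⟨h1, h2, h3⟩ := h
  refine ⟨fun s => by simp [h1], fun y => ?_, ?_⟩
  · obtain ⟨k, s, hs⟩ := h2 (σ.symm y)
    exact ⟨k, s, by rw [hit, ← hs]; rfl⟩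
  · obtain ⟨k, s, hs⟩ := h3
    exact ⟨k, s, by rw [hit, σ.symm_apply_apply, ← hs]; rfl⟩

/-- Conjugation by the transposition of `x` and `y` turns markings for `x` into markings for `y`. -/
lemma card_marked_pairs_le [NeZero p] [NeZero q] [Fintype V] (x y : V) :
    #{fe : (V → V) × (ZMod p ⊕ ZMod q ↪ V) | Marked fe.1 x fe.2}
      ≤ #{fe : (V → V) × (ZMod p ⊕ ZMod q ↪ V) | Marked fe.1 y fe.2} := by
  set σ := Equiv.swap x y
  refine card_le_card_of_injOn (fun fe => (σ ∘ fe.1 ∘ σ.symm, fe.2.trans σ.toEmbedding)) ?_ ?_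
  · intro fe hfe
    simp only [coe_filter, mem_univ, true_and, Set.mem_ofPred_eq] at hfe ⊢
    have := hfe.conj σ
    rwa [Equiv.swap_apply_left] at this
  · rintro ⟨f, e⟩ - ⟨f', e'⟩ - h
    simp only [Prod.mk.injEq] at h
    obtain ⟨h1, h2⟩ := h
    refine Prod.ext ?_ ?_
    · funext z
      have := congrFun h1 (σ z)
      simpa using this
    · ext z
      have := DFunLike.congr_fun h2 z
      simpa using this

/-- For a fixed embedding `e`, the completions of the two prescribed cycles, together with a
point `x` in the component of the first one, are counted by `sum_completions`. -/
lemma sum_card_marked [NeZero p] [NeZero q] [Fintype V] (e : ZMod p ⊕ ZMod q ↪ V) :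
    ∑ f : V → V, #{x | Marked f x e} = p * Fintype.card V ^ (Fintype.card V - (p + q)) := by
  set U : Finset V := (univ.map e)ᶜ with hUdef
  have hU : ∀ y, y ∈ U ↔ ¬ ∃ s, e s = y := by intro y; simp [hUdef]
  set g : V → V := Function.extend e (e ∘ rot p q) id with hg
  have hge : ∀ s, g (e s) = e (rot p q s) := fun s => e.injective.extend_apply _ _ s
  have hgU : ∀ u ∈ U, g u = u := fun u hu => Function.extend_apply' _ _ _ ((hU u).1 hu)
  have hA : ∀ y ∈ Set.range (e ∘ Sum.inl), g y ∈ Set.range (e ∘ Sum.inl) := by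
    rintro _ ⟨i, rfl⟩
    exact ⟨i + 1, (hge (Sum.inl i)).symm⟩
  have hC : ∀ y ∈ Set.range e, g y ∈ Set.range e := by
    rintro _ ⟨i, rfl⟩
    exact ⟨_, (hge _).symm⟩
  have main := sum_completions (Set.range (e ∘ Sum.inl)) (Set.range e)
    (Set.range_comp_subset_range _ _) U g hA hC hgU (fun u hu => (hU u).1 hu) (fun y => by
      refine ⟨0, ?_⟩
      by_cases hy : y ∈ U
      · exact Or.inr hy
      · rw [hU, not_not] at hy
        exact Or.inl hy)
  have hcardU : #U = Fintype.card V - (p + q) := by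
    rw [hUdef, card_compl, card_map, card_univ, Fintype.card_sum, ZMod.card, ZMod.card]
  have hcardA : #{x | Reach g (Set.range (e ∘ Sum.inl)) x} = p := by
    have hcompl : ∀ y ∈ (Set.range (e ∘ Sum.inl))ᶜ, g y ∈ (Set.range (e ∘ Sum.inl))ᶜ := by
      intro y hy
      by_cases hyU : y ∈ U
      · rw [hgU y hyU]; exact hy
      · rw [hU, not_not] at hyU
        obtain ⟨s | s, rfl⟩ := hyU
        · exact absurd ⟨s, rfl⟩ hy
        · rw [hge]
          rintro ⟨i, hi⟩
          exact absurd (e.injective hi) (by simp [rot])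
    have : (univ.filter fun x => Reach g (Set.range (e ∘ Sum.inl)) x)
        = univ.image (e ∘ Sum.inl) := by
      ext x
      simp only [mem_filter, mem_univ, true_and, mem_image]
      constructor
      · rintro ⟨k, hk⟩
        by_contra hx
        exact iterate_mem_of_closed hcompl (y := x) hx k hk
      · rintro hx
        exact ⟨0, hx⟩
    rw [this, card_image_of_injective _ (e.injective.comp Sum.inl_injective), card_univ,
      ZMod.card]
  rw [hcardA, hcardU] at main
  rw [← main, sum_filter]
  refine sum_congr rfl fun f _ => ?_
  have hiff : (∀ s, f (e s) = e (rot p q s)) ↔ ∀ y ∉ U, f y = g y := by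
    constructor
    · intro h y hy
      rw [hU, not_not] at hy
      obtain ⟨s, rfl⟩ := hy
      rw [h, hge]
    · intro h s
      rw [h _ (by rw [hU, not_not]; exact ⟨s, rfl⟩), hge]
  split_ifs with h
  · congr 1
    ext x
    simp only [mem_filter, mem_univ, true_and, Marked, hiff]
    tauto
  · rw [card_eq_zero, filter_eq_empty_iff]
    intro x _ hx
    exact h ⟨hiff.1 hx.1, hx.2.1⟩

/-- Double counting of the triples `(f, x, e)` with `Marked f x e`, using that the number of
pairs `(f, e)` is the same for all `x`. -/
lemma card_mul_card_marked_pairs [NeZero p] [NeZero q] [Fintype V] (x : V) :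
    Fintype.card V * #{fe : (V → V) × (ZMod p ⊕ ZMod q ↪ V) | Marked fe.1 x fe.2}
      = (Fintype.card V).descFactorial (p + q)
        * (p * Fintype.card V ^ (Fintype.card V - (p + q))) := by
  have h1 : ∑ y : V, #{fe : (V → V) × (ZMod p ⊕ ZMod q ↪ V) | Marked fe.1 y fe.2}
      = Fintype.card V * #{fe : (V → V) × (ZMod p ⊕ ZMod q ↪ V) | Marked fe.1 x fe.2} := by
    rw [sum_congr rfl (fun y _ => le_antisymm (card_marked_pairs_le y x)
      (card_marked_pairs_le x y)), sum_const, card_univ, smul_eq_mul]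
  rw [← h1]
  have h2 : ∀ y : V, #{fe : (V → V) × (ZMod p ⊕ ZMod q ↪ V) | Marked fe.1 y fe.2}
      = ∑ e : ZMod p ⊕ ZMod q ↪ V, ∑ f : V → V, if Marked f y e then 1 else 0 := by
    intro y
    rw [card_filter, Fintype.sum_prod_type_right]
  have h3 : ∀ e : ZMod p ⊕ ZMod q ↪ V,
      ∑ y : V, ∑ f : V → V, (if Marked f y e then 1 else 0)
        = p * Fintype.card V ^ (Fintype.card V - (p + q)) := by
    intro e
    rw [sum_comm, ← sum_card_marked e]
    simp only [card_filter]
  rw [sum_congr rfl (fun y _ => h2 y), sum_comm, sum_congr rfl (fun e _ => h3 e), sum_const,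
    card_univ, Fintype.card_embedding_eq, Fintype.card_sum, ZMod.card, ZMod.card, smul_eq_mul]

end Marked

/-! ### Global orbit patterns -/

section Gop

variable {N : ℕ} {f : Fin N → Fin N}

lemma sameComp_symm {x y : Fin N} (h : sameComp f x y) : sameComp f y x := by
  obtain ⟨k, l, h⟩ := h
  exact ⟨l, k, h.symm⟩

lemma sameComp_trans {x y z : Fin N} (h : sameComp f x y) (h' : sameComp f y z) :
    sameComp f x z := by
  obtain ⟨k, l, h⟩ := h
  obtain ⟨k', l', h'⟩ := h'
  refine ⟨k' + k, l + l', ?_⟩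
  rw [Function.iterate_add_apply, h, Function.iterate_add_apply, ← h',
    ← Function.iterate_add_apply, ← Function.iterate_add_apply, Nat.add_comm]

/-- If the orbit of `y` enters an injectively parametrised `p`-cycle, then `y` has order `p`. -/
lemma gopOrd_eq {p : ℕ} (hp : 0 < p) {α : ZMod p → Fin N} (hα : α.Injective)
    (hf : ∀ (k : ℕ) i, f^[k] (α i) = α (i + k)) {y : Fin N} (hy : Reach f (Set.range α) y) :
    gopOrd f y = p := by
  obtain ⟨k, i, hk⟩ := hy
  apply le_antisymm
  · refine Nat.sInf_le ⟨hp, k, ?_⟩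
    rw [Nat.add_comm, Function.iterate_add_apply, ← hk, hf]
    simp
  · refine le_csInf ⟨p, hp, k, ?_⟩ ?_
    · rw [Nat.add_comm, Function.iterate_add_apply, ← hk, hf]
      simp
    · rintro m ⟨hm, K, hK⟩
      have := congrArg (f^[k]) hK
      rw [← Function.iterate_add_apply, ← Function.iterate_add_apply, Nat.add_comm k,
        Nat.add_comm k, Function.iterate_add_apply f (K + m) k,
        Function.iterate_add_apply f K k, ← hk, hf, hf] at this
      have h0 := hα this
      simp only [Nat.cast_add, add_right_inj, add_eq_left] at h0
      exact Nat.le_of_dvd hm ((ZMod.natCast_eq_zero_iff _ _).1 h0)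

/-- The cycle in the component of a point of order `p`, parametrised by `ZMod p`. -/
lemma exists_cycle {p : ℕ} (hp : 0 < p) {y : Fin N} (hy : gopOrd f y = p) :
    ∃ α : ZMod p → Fin N, α.Injective ∧ (∀ i, f (α i) = α (i + 1)) ∧
      (∀ i, ∃ k, f^[k] y = α i) := by
  have : NeZero p := ⟨hp.ne'⟩
  have hne : {p : ℕ | 0 < p ∧ ∃ K : ℕ, f^[K + p] y = f^[K] y}.Nonempty := by
    by_contra h
    rw [Set.not_nonempty_iff_eq_empty] at h
    rw [gopOrd, h, Nat.sInf_empty] at hy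
    omega
  have hmem := Nat.sInf_mem hne
  change 0 < gopOrd f y ∧ ∃ K : ℕ, f^[K + gopOrd f y] y = f^[K] y at hmem
  rw [hy] at hmem
  obtain ⟨-, K, hK⟩ := hmem
  have hmin : ∀ m, 0 < m → m < p → ∀ K, f^[K + m] y ≠ f^[K] y := by
    intro m hm hmp K h
    have : gopOrd f y ≤ m := Nat.sInf_le ⟨hm, K, h⟩
    omega
  have hper : Function.Periodic (fun m => f^[K + m] y) p := by
    intro m
    change f^[K + (m + p)] y = f^[K + m] y
    rw [show K + (m + p) = m + (K + p) by ring, Nat.add_comm K m,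
      Function.iterate_add_apply _ m, hK, Function.iterate_add_apply]
  refine ⟨fun i => f^[K + i.val] y, ?_, ?_, fun i => ⟨_, rfl⟩⟩
  · intro i j hij
    have hlt : ∀ i j : ZMod p, i.val < j.val → f^[K + i.val] y ≠ f^[K + j.val] y := by
      intro i j h h'
      have hj := ZMod.val_lt j
      apply hmin (j.val - i.val) (by omega) (by omega) (K + i.val)
      rw [h']
      congr 1
      omega
    rcases lt_trichotomy i.val j.val with h | h | h
    · exact absurd hij (hlt i j h)
    · exact ZMod.val_injective p h
    · exact absurd hij.symm (hlt j i h)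
  · intro i
    have h1 : (i + 1).val = (i.val + 1) % p := by
      rw [ZMod.val_add, ZMod.val_one_eq_one_mod, Nat.add_mod_mod]
    change f (f^[K + i.val] y) = f^[K + (i + 1).val] y
    rw [h1, ← Function.iterate_succ_apply' f]
    exact (hper.map_mod_nat (i.val + 1)).symm

/-- The least element of each component. -/
lemma exists_min (f : Fin N → Fin N) (y : Fin N) :
    ∃ m, sameComp f m y ∧ ∀ z, sameComp f m z → m ≤ z := by
  have hne : (univ.filter fun z => sameComp f z y).Nonempty := ⟨y, by simp; exact ⟨0, 0, rfl⟩⟩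
  refine ⟨_, (mem_filter.1 (min'_mem _ hne)).2, fun z hz => min'_le _ _ ?_⟩
  exact mem_filter.2 ⟨mem_univ _,
    sameComp_trans (sameComp_symm hz) (mem_filter.1 (min'_mem _ hne)).2⟩

/-- The pattern `[p, q]` means: there are two components, and the one containing `0` has the
`p`-cycle. -/
lemma gop_eq_pair_iff {p q : ℕ} (hp : 0 < p) (hq : 0 < q) (hN : 0 < N) :
    gop f = [p, q] ↔ ∃ e : ZMod p ⊕ ZMod q ↪ Fin N, Marked f ⟨0, hN⟩ e := by
  have : NeZero p := ⟨hp.ne'⟩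
  have : NeZero q := ⟨hq.ne'⟩
  have hzero : ∀ y : Fin N, (⟨0, hN⟩ : Fin N) ≤ y := fun y => Nat.zero_le _
  constructor
  · intro h
    rw [gop, List.map_eq_cons_iff] at h
    obtain ⟨a, l, hl, ha, h⟩ := h
    rw [List.map_eq_cons_iff] at h
    obtain ⟨b, l', rfl, hb, h⟩ := h
    rw [List.map_eq_nil_iff] at h
    subst h
    have hmem : ∀ x : Fin N, (∀ y, sameComp f x y → x ≤ y) ↔ x = a ∨ x = b := by
      intro x
      have : x ∈ (univ.filter (fun x : Fin N => ∀ y : Fin N, sameComp f x y → x ≤ y)).sort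
          (· ≤ ·) ↔ x ∈ [a, b] := by rw [hl]
      simpa using this
    have hab : a < b := by
      have := (univ.filter (fun x : Fin N => ∀ y : Fin N, sameComp f x y → x ≤ y)).sortedLT_sort
      rw [hl] at this
      simpa using this.pairwise
    have ha0 : a = ⟨0, hN⟩ := by
      rcases (hmem ⟨0, hN⟩).1 (fun y _ => hzero y) with h | h
      · exact h.symm
      · exact absurd (h ▸ hab) (not_lt.2 (hzero a))
    have hnot : ¬ sameComp f a b := by
      intro h
      exact absurd ((hmem b).2 (Or.inr rfl) a (sameComp_symm h)) (not_le.2 hab)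
    obtain ⟨α, hαi, hα, hαa⟩ := exists_cycle hp ha
    obtain ⟨β, hβi, hβ, hβb⟩ := exists_cycle hq hb
    have hne : ∀ i j, α i ≠ β j := by
      intro i j h
      obtain ⟨k, hk⟩ := hαa i
      obtain ⟨l, hl⟩ := hβb j
      exact hnot ⟨k, l, by rw [hk, hl, h]⟩
    have hclα : ∀ y ∈ Set.range α, f y ∈ Set.range α := by
      rintro _ ⟨i, rfl⟩; exact ⟨i + 1, (hα i).symm⟩
    have hclβ : ∀ y ∈ Set.range β, f y ∈ Set.range β := by
      rintro _ ⟨i, rfl⟩; exact ⟨i + 1, (hβ i).symm⟩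
    have hra : Reach f (Set.range α) a := by
      obtain ⟨k, hk⟩ := hαa 0
      exact ⟨k, 0, hk.symm⟩
    have hrb : Reach f (Set.range β) b := by
      obtain ⟨k, hk⟩ := hβb 0
      exact ⟨k, 0, hk.symm⟩
    refine ⟨⟨Sum.elim α β, hαi.sumElim hβi hne⟩, ?_, ?_, ?_⟩
    · rintro (i | i)
      · exact hα i
      · exact hβ i
    · intro y
      obtain ⟨m, hmy, hm⟩ := exists_min f y
      rcases (hmem m).1 hm with rfl | rfl
      · obtain ⟨k, l, hkl⟩ := hmy
        rw [← reach_iterate hclα k, hkl, reach_iterate hclα] at hra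
        obtain ⟨n, i, hn⟩ := hra
        exact ⟨n, Sum.inl i, hn⟩
      · obtain ⟨k, l, hkl⟩ := hmy
        rw [← reach_iterate hclβ k, hkl, reach_iterate hclβ] at hrb
        obtain ⟨n, i, hn⟩ := hrb
        exact ⟨n, Sum.inr i, hn⟩
    · rw [← ha0]
      exact hra
  · rintro ⟨e, h1, h2, h3⟩
    have hcl : ∀ y ∈ Set.range (e ∘ Sum.inl), f y ∈ Set.range (e ∘ Sum.inl) := by
      rintro _ ⟨i, rfl⟩; exact ⟨i + 1, (h1 (Sum.inl i)).symm⟩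
    have hcr : ∀ y ∈ Set.range (e ∘ Sum.inr), f y ∈ Set.range (e ∘ Sum.inr) := by
      rintro _ ⟨i, rfl⟩; exact ⟨i + 1, (h1 (Sum.inr i)).symm⟩
    have hor : ∀ y, Reach f (Set.range (e ∘ Sum.inl)) y ∨ Reach f (Set.range (e ∘ Sum.inr)) y := by
      intro y
      obtain ⟨k, s | s, hs⟩ := h2 y
      · exact Or.inl ⟨k, s, hs⟩
      · exact Or.inr ⟨k, s, hs⟩
    have hnb : ∀ y, Reach f (Set.range (e ∘ Sum.inl)) y →
        ¬ Reach f (Set.range (e ∘ Sum.inr)) y := by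
      rintro y ⟨k, i, hk⟩ hy
      rw [← reach_iterate hcr k, ← hk] at hy
      obtain ⟨m, j, hj⟩ := hy
      have := iterate_inl h1 m i
      rw [Function.comp_apply, Function.comp_apply, this] at hj
      exact absurd (e.injective hj) (by simp)
    have hsl : ∀ y z, sameComp f y z → (Reach f (Set.range (e ∘ Sum.inl)) y ↔
        Reach f (Set.range (e ∘ Sum.inl)) z) := by
      rintro y z ⟨k, l, hkl⟩
      rw [← reach_iterate hcl k, hkl, reach_iterate hcl]
    -- Points reaching the same marked cycle lie in one component.
    have hsame : ∀ (r : ℕ) (_ : NeZero r) (α : ZMod r → Fin N)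
        (_ : ∀ (k : ℕ) i, f^[k] (α i) = α (i + k)) (y z : Fin N),
        Reach f (Set.range α) y → Reach f (Set.range α) z → sameComp f y z := by
      rintro r _ α hα y z ⟨k, i, hk⟩ ⟨l, j, hl⟩
      refine ⟨(j - i).val + k, l, ?_⟩
      rw [Function.iterate_add_apply, ← hk, hα, ← hl, ZMod.natCast_zmod_val, add_sub_cancel]
    have hsamel := hsame p inferInstance (e ∘ Sum.inl) (iterate_inl h1)
    have hsamer := hsame q inferInstance (e ∘ Sum.inr) (iterate_inr h1)
    obtain ⟨b, hb, hbmin⟩ := exists_min f (e (Sum.inr 0))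
    have hbr : Reach f (Set.range (e ∘ Sum.inr)) b := by
      refine (hor b).resolve_left fun h => ?_
      exact hnb _ ((hsl _ _ hb).1 h) ⟨0, 0, rfl⟩
    have hb0 : (⟨0, hN⟩ : Fin N) < b := by
      refine lt_of_le_of_ne (hzero b) ?_
      rintro rfl
      exact hnb _ h3 hbr
    have hset : (univ.filter (fun x : Fin N => ∀ y : Fin N, sameComp f x y → x ≤ y))
        = {⟨0, hN⟩, b} := by
      ext x
      simp only [mem_filter, mem_univ, true_and, mem_insert, mem_singleton]
      constructor
      · intro hx
        rcases hor x with h | h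
        · left
          exact le_antisymm (hx _ (hsamel _ _ h h3)) (hzero x)
        · right
          have := hsamer _ _ h hbr
          exact le_antisymm (hx _ this) (hbmin _ (sameComp_symm this))
      · rintro (rfl | rfl)
        · exact fun y _ => hzero y
        · exact hbmin
    have hsort : ({⟨0, hN⟩, b} : Finset (Fin N)).sort (· ≤ ·) = [⟨0, hN⟩, b] := by
      rw [sort_insert]
      · simp
      · intro y _; exact hzero y
      · simpa using hb0.ne
    rw [gop, hset, hsort]
    simp only [List.map_cons, List.map_nil]
    rw [gopOrd_eq hp (e.injective.comp Sum.inl_injective) (iterate_inl h1) h3,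
      gopOrd_eq hq (e.injective.comp Sum.inr_injective) (iterate_inr h1) hbr]

end Gop

/-- for `N ≥ 2` and positive integers `p, q` with `p + q ≤ N`, the number of
`f ∈ F_N` whose global orbit pattern is `[p, q]` equals
`(N−1)! · N^{N−(p+q)} / ((N−(p+q))! · q)` (stated here in multiplied-out form, the
division being exact). -/
theorem card_gop_pair (N p q : ℕ) (hN : 2 ≤ N) (hp : 0 < p) (hq : 0 < q)
    (hpq : p + q ≤ N) :
    Nat.card {f : Fin N → Fin N // gop f = [p, q]} * ((N - (p + q)).factorial * q)
      = (N - 1).factorial * N ^ (N - (p + q)) := by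
  have : NeZero p := ⟨hp.ne'⟩
  have : NeZero q := ⟨hq.ne'⟩
  have hN0 : 0 < N := by omega
  have hpairs : N * #{fe : (Fin N → Fin N) × (ZMod p ⊕ ZMod q ↪ Fin N) |
      Marked fe.1 ⟨0, hN0⟩ fe.2} = N.descFactorial (p + q) * (p * N ^ (N - (p + q))) := by
    have h := card_mul_card_marked_pairs (p := p) (q := q) (⟨0, hN0⟩ : Fin N)
    simp only [Fintype.card_fin] at h
    convert h
  have hfib : #{fe : (Fin N → Fin N) × (ZMod p ⊕ ZMod q ↪ Fin N) | Marked fe.1 ⟨0, hN0⟩ fe.2}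
      = Nat.card {f : Fin N → Fin N // gop f = [p, q]} * (p * q) := by
    have h1 : ∀ f : Fin N → Fin N,
        ∑ e : ZMod p ⊕ ZMod q ↪ Fin N, (if Marked f ⟨0, hN0⟩ e then 1 else 0)
          = if gop f = [p, q] then p * q else 0 := by
      intro f
      rw [← card_filter]
      split_ifs with h
      · obtain ⟨e, he⟩ := (gop_eq_pair_iff hp hq hN0).1 h
        convert card_marked he
      · rw [card_eq_zero, filter_eq_empty_iff]
        intro e _ he
        exact h ((gop_eq_pair_iff hp hq hN0).2 ⟨e, he⟩)
    rw [card_filter, Fintype.sum_prod_type, sum_congr rfl (fun f _ => h1 f), ← sum_filter,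
      sum_const, smul_eq_mul, Nat.card_eq_fintype_card, Fintype.card_subtype]
  rw [hfib] at hpairs
  have hfac := Nat.factorial_mul_descFactorial hpq
  have hfacN : N * (N - 1).factorial = N.factorial := Nat.mul_factorial_pred (by omega)
  apply Nat.eq_of_mul_eq_mul_left (Nat.mul_pos hN0 hp)
  calc N * p * (Nat.card {f : Fin N → Fin N // gop f = [p, q]} * ((N - (p + q)).factorial * q))
      = (N * (Nat.card {f : Fin N → Fin N // gop f = [p, q]} * (p * q)))
          * (N - (p + q)).factorial := by ring
    _ = ((N - (p + q)).factorial * N.descFactorial (p + q)) * (p * N ^ (N - (p + q))) := by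
        rw [hpairs]; ring
    _ = N * p * ((N - 1).factorial * N ^ (N - (p + q))) := by
        rw [hfac, ← hfacN]; ring
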